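/- arXiv:2203.00950 — 2 statements merged into one kernel-verified Lean document; each statement's English description precedes it below -/
import Mathlib

section
/- Let N ≥ 2, f : [0,T] × ℝ^N → ℝ^N continuous, V : ℝ^N → ℝ a C¹ function, p ∈ ℝ^N and c ∈ ℝ such that V(p) < c and the level set V^{-1}(c) is bounded and nonempty. Assume ⟨∇V(u), p − u⟩ < 0 for all u ∈ V^{-1}(c), and ⟨f(t,u), ∇V(u)⟩ ≤ 0 for all u ∈ V^{-1}(c) and t ∈ [0,T]. Then there exists a differentiable y : [0,T] → ℝ^N with y'(t) = f(t, y(t)) for all t ∈ [0,T], y(0) = y(T), and V(y(t)) ≤ c for all t ∈ [0,T]. -/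
open Set Metric
open scoped RealInnerProductSpace

/-!
A retraction `H` of a closed ball onto its boundary sphere cannot be `C¹` (Milnor, Rogers): with
`g = H - id`, the map `id + t • g` permutes the ball for small `t`, so the integral of
`det (1 + t • Dg)` is the volume of the ball for small `t`, hence, being polynomial in `t`, also
for `t = 1`, where the determinant vanishes. Brouwer's fixed point theorem follows.

By the condition on `p`, the sub-level set `M` is compact and strictly star-shaped about `p`, so
moving points along segments towards `p` until they meet `M` retracts the whole space onto `M`,
and `M` has the fixed point property. On `M` the field `f` is uniformly approximated by `C¹`
fields which point strictly inwards along the level set; the flow of such a field preserves `M`,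
and a fixed point of its time-`T` map is the initial value of a periodic solution. These solutions
are equi-Lipschitz with values in the compact set `M`, and their limit along an ultrafilter solves
the equation for `f`.
-/

open Filter Function MeasureTheory Topology
open scoped NNReal Polynomial Manifold

section SmallPerturbation

variable {E : Type*} [NormedAddCommGroup E] [NormedSpace ℝ E]

lemma bijective_id_add_of_lipschitzWith [CompleteSpace E] {g : E → E} {K : ℝ≥0}
    (hg : LipschitzWith K g) (hK : K < 1) : Bijective fun x => x + g x := by
  have happrox : ApproximatesLinearOn (fun x => x + g x)
      (ContinuousLinearEquiv.refl ℝ E : E →L[ℝ] E) univ K := by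
    rw [ApproximatesLinearOn.approximatesLinearOn_iff_lipschitzOnWith, lipschitzOnWith_univ]
    convert hg using 1
    ext x
    simp
  have hsmall : Subsingleton E ∨
      K < ‖((ContinuousLinearEquiv.refl ℝ E).symm : E →L[ℝ] E)‖₊⁻¹ := by
    cases subsingleton_or_nontrivial E with
    | inl h => exact .inl h
    | inr _ => right; simpa using hK
  exact ⟨injOn_univ.1 (happrox.injOn hsmall), happrox.surjective hsmall⟩

variable [FiniteDimensional ℝ E]

lemma det_one_add_pos_of_norm_lt_one {A : E →L[ℝ] E} (hA : ‖A‖ < 1) : 0 < (1 + A).det := by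
  have hdet_ne : ∀ B ∈ ball (0 : E →L[ℝ] E) 1, (1 + B).det ≠ 0 := fun B hB => by
    have hunit : IsUnit (1 - -B) :=
      isUnit_one_sub_of_norm_lt_one (by simpa using hB)
    rw [sub_neg_eq_add] at hunit
    exact ((hunit.map ContinuousLinearMap.toLinearMapRingHom).map LinearMap.det).ne_zero
  have hcont : ContinuousOn (fun B : E →L[ℝ] E => (1 + B).det) (ball 0 1) :=
    (ContinuousLinearMap.continuous_det.comp (by fun_prop)).continuousOn
  by_contra! hneg
  obtain ⟨B, hB, hB0⟩ := (convex_ball (0 : E →L[ℝ] E) 1).isPreconnected.intermediate_value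
    (mem_ball_zero_iff.2 hA) (mem_ball_self one_pos) hcont
    (show (0 : ℝ) ∈ Icc _ _ from ⟨hneg, by simp [ContinuousLinearMap.det]⟩)
  exact hdet_ne B hB hB0

variable [MeasurableSpace E] [BorelSpace E] (μ : Measure E) [μ.IsAddHaarMeasure]

lemma integrableOn_and_setIntegral_det_one_add_fderiv_of_lipschitzWith_lt_one
    {g : E → E} {K : ℝ≥0} (hg : LipschitzWith K g) (hK : K < 1) {B : Set E}
    (hBmeas : MeasurableSet B) (hBfin : μ B ≠ ⊤) (hsupp : ∀ x ∉ B, g x = 0)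
    (hdiff : ∀ x ∈ B, DifferentiableAt ℝ g x) :
    IntegrableOn (fun x => (1 + fderiv ℝ g x).det) B μ ∧
      ∫ x in B, (1 + fderiv ℝ g x).det ∂μ = μ.real B := by
  have hbij := bijective_id_add_of_lipschitzWith hg hK
  have himage : (fun x => x + g x) '' B = B := by
    rw [← compl_inj_iff, ← image_compl_eq hbij]
    calc (fun x => x + g x) '' Bᶜ = id '' Bᶜ := image_congr fun x hx => by simp [hsupp x hx]
      _ = Bᶜ := image_id _
  have hderiv : ∀ x ∈ B, HasFDerivWithinAt (fun x => x + g x) (1 + fderiv ℝ g x) B x :=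
    fun x hx => ((hasFDerivAt_id x).add (hdiff x hx).hasFDerivAt).hasFDerivWithinAt
  have habs : EqOn (fun x => |(1 + fderiv ℝ g x).det| • (1 : ℝ))
      (fun x => (1 + fderiv ℝ g x).det) B := fun x _ => by
    have : ‖fderiv ℝ g x‖ < 1 := (norm_fderiv_le_of_lipschitz ℝ hg).trans_lt (by exact_mod_cast hK)
    simp [abs_of_pos (det_one_add_pos_of_norm_lt_one this)]
  constructor
  · refine IntegrableOn.congr_fun ?_ habs hBmeas
    rw [← integrableOn_image_iff_integrableOn_abs_det_fderiv_smul μ hBmeas hderiv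
      hbij.injective.injOn fun _ => (1 : ℝ), himage]
    exact integrableOn_const hBfin
  · rw [← setIntegral_congr_fun hBmeas habs, ← integral_image_eq_integral_abs_det_fderiv_smul μ
      hBmeas hderiv hbij.injective.injOn fun _ => (1 : ℝ), himage]
    simp

end SmallPerturbation

section Polynomial

lemma exists_weights_forall_eval_one_eq_sum (n : ℕ) {ε : ℝ} (hε : 0 < ε) :
    ∃ t w : Fin (n + 1) → ℝ, (∀ i, t i ∈ Ioo 0 ε) ∧
      ∀ q : ℝ[X], q.natDegree ≤ n → q.eval 1 = ∑ i, w i * q.eval (t i) := by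
  let node : ℕ ↪ Ioo 0 ε := (Ioo_infinite hε).natEmbedding
  let t : Fin (n + 1) → ℝ := fun i => node i
  have ht : Injective t :=
    Subtype.val_injective.comp (node.injective.comp Fin.val_injective)
  refine ⟨t, fun i => (Lagrange.basis Finset.univ t i).eval 1, fun i => (node i).2, fun q hq => ?_⟩
  have hdeg : q.degree < (Finset.univ : Finset (Fin (n + 1))).card := by
    rw [Finset.card_fin]
    exact Polynomial.degree_le_natDegree.trans_lt (by exact_mod_cast Nat.lt_succ_of_le hq)
  conv_lhs => rw [Lagrange.eq_interpolate ht.injOn hdeg]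
  simp [Lagrange.interpolate_apply, Polynomial.eval_finsetSum, mul_comm]

lemma exists_polynomial_eval_eq_det_one_add_smul {E : Type*} [NormedAddCommGroup E]
    [NormedSpace ℝ E] [FiniteDimensional ℝ E] (A : E →L[ℝ] E) :
    ∃ q : ℝ[X], q.natDegree ≤ Module.finrank ℝ E ∧ ∀ s : ℝ, q.eval s = (1 + s • A).det := by
  set M := LinearMap.toMatrix (Module.finBasis ℝ E) (Module.finBasis ℝ E) A.toLinearMap with hM
  refine ⟨((Polynomial.X : ℝ[X]) • M.map Polynomial.C
    + (1 : Matrix _ _ ℝ).map Polynomial.C).det, ?_, fun s => ?_⟩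
  · simpa using Polynomial.natDegree_det_X_add_C_le M 1
  · have hmatrix : (1 + s • A).det = (1 + s • M).det := by
      rw [ContinuousLinearMap.det, ← LinearMap.det_toMatrix (Module.finBasis ℝ E)]
      congr 1
      simp [hM]
    rw [hmatrix, ← Polynomial.coe_evalRingHom, RingHom.map_det]
    congr 1
    ext i j
    by_cases hij : i = j <;> simp [hij, add_comm, mul_comm s]

end Polynomial

section Volume

variable {E : Type*} [NormedAddCommGroup E] [NormedSpace ℝ E] [FiniteDimensional ℝ E]
  [MeasurableSpace E] [BorelSpace E] (μ : Measure E) [μ.IsAddHaarMeasure]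

lemma setIntegral_det_one_add_fderiv_of_lipschitzWith {g : E → E} {K : ℝ≥0}
    (hg : LipschitzWith K g) {B : Set E} (hBmeas : MeasurableSet B) (hBfin : μ B ≠ ⊤)
    (hsupp : ∀ x ∉ B, g x = 0) (hdiff : ∀ x ∈ B, DifferentiableAt ℝ g x) :
    ∫ x in B, (1 + fderiv ℝ g x).det ∂μ = μ.real B := by
  obtain ⟨t, w, ht, hw⟩ := exists_weights_forall_eval_one_eq_sum (Module.finrank ℝ E)
    (show (0 : ℝ) < (K + 1)⁻¹ by positivity)
  have hsmall (i) : IntegrableOn (fun x => (1 + t i • fderiv ℝ g x).det) B μ ∧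
      ∫ x in B, (1 + t i • fderiv ℝ g x).det ∂μ = μ.real B := by
    have hlip : LipschitzWith (‖t i‖₊ * K) fun x => t i • g x :=
      (lipschitzWith_smul (t i)).comp hg
    have hlt : ‖t i‖₊ * K < 1 := by
      rw [← NNReal.coe_lt_coe, NNReal.coe_mul, coe_nnnorm, Real.norm_of_nonneg (ht i).1.le]
      calc t i * K ≤ (K + 1 : ℝ)⁻¹ * K := by gcongr; exact (ht i).2.le
        _ < 1 := by rw [inv_mul_lt_one₀ (by positivity)]; linarith
    have hderiv : EqOn (fun x => (1 + fderiv ℝ (fun z => t i • g z) x).det)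
        (fun x => (1 + t i • fderiv ℝ g x).det) B :=
      fun x hx => by simp only [fderiv_fun_const_smul (hdiff x hx)]
    rw [← integrableOn_congr_fun hderiv hBmeas, ← setIntegral_congr_fun hBmeas hderiv]
    exact integrableOn_and_setIntegral_det_one_add_fderiv_of_lipschitzWith_lt_one μ hlip hlt
      hBmeas hBfin (fun x hx => by simp [hsupp x hx]) fun x hx => (hdiff x hx).const_smul (t i)
  have hdet (x : E) : (1 + fderiv ℝ g x).det = ∑ i, w i * (1 + t i • fderiv ℝ g x).det := by
    obtain ⟨q, hdeg, hq⟩ := exists_polynomial_eval_eq_det_one_add_smul (fderiv ℝ g x)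
    simpa [hq] using hw q hdeg
  have hsum : ∑ i, w i = 1 := by simpa using (hw 1 (by simp)).symm
  simp_rw [hdet]
  rw [integral_finsetSum _ fun i _ => (hsmall i).1.const_mul (w i)]
  simp_rw [integral_const_mul, fun i => (hsmall i).2, ← Finset.sum_mul, hsum, one_mul]

end Volume

section Retraction

lemma nonempty_inter_frontier_of_isPreconnected {X : Type*} [TopologicalSpace X] {s t : Set X}
    (ht : IsPreconnected t) (hin : (t ∩ s).Nonempty) (hout : (t ∩ sᶜ).Nonempty) :
    (t ∩ frontier s).Nonempty := by
  by_contra hempty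
  have hcover : t ⊆ interior s ∪ (closure s)ᶜ := fun x hx => by
    by_contra hx'
    rw [mem_union, mem_compl_iff, not_or, not_not] at hx'
    exact hempty ⟨x, hx, hx'.2, hx'.1⟩
  obtain ⟨y, hy, hys⟩ := hin
  obtain ⟨z, hz, hzs⟩ := hout
  obtain ⟨x, -, hxi, hxc⟩ := ht _ _ isOpen_interior isClosed_closure.isOpen_compl hcover
    ⟨y, hy, (hcover hy).resolve_right fun h => h (subset_closure hys)⟩
    ⟨z, hz, (hcover hz).resolve_left fun h => hzs (interior_subset h)⟩
  exact hxc (subset_closure (interior_subset hxi))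

lemma lipschitzWith_indicator_of_eq_zero_on_frontier {E F : Type*} [NormedAddCommGroup E]
    [NormedSpace ℝ E] [SeminormedAddCommGroup F] {g : E → F} {K : ℝ≥0} {s : Set E}
    (hg : LipschitzOnWith K g s) (hs : IsClosed s) (hzero : ∀ x ∈ frontier s, g x = 0) :
    LipschitzWith K (s.indicator g) := by
  have hcross : ∀ x ∈ s, ∀ y ∉ s, dist (s.indicator g x) (s.indicator g y) ≤ K * dist x y := by
    intro x hx y hy
    obtain ⟨z, hz, hzs⟩ := nonempty_inter_frontier_of_isPreconnected
      (convex_segment x y).isPreconnected ⟨x, left_mem_segment ℝ x y, hx⟩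
      ⟨y, right_mem_segment ℝ x y, hy⟩
    calc dist (s.indicator g x) (s.indicator g y) = dist (g x) (g z) := by
          rw [indicator_of_mem hx, indicator_of_notMem hy, hzero z hzs]
      _ ≤ K * dist x z := hg.dist_le_mul x hx z (hs.frontier_subset hzs)
      _ ≤ K * dist x y := by
          gcongr
          linarith [dist_add_dist_of_mem_segment hz, dist_nonneg (x := z) (y := y)]
  refine LipschitzWith.of_dist_le_mul fun x y => ?_
  by_cases hx : x ∈ s <;> by_cases hy : y ∈ s
  · simpa [hx, hy] using hg.dist_le_mul x hx y hy
  · exact hcross x hx y hy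
  · simpa only [dist_comm] using hcross y hy x hx
  · simpa [hx, hy] using mul_nonneg K.2 dist_nonneg

variable {E : Type*} [NormedAddCommGroup E] [InnerProductSpace ℝ E] [FiniteDimensional ℝ E]

lemma det_eq_zero_of_norm_eventually_const {H : E → E} {H' : E →L[ℝ] E} {x : E} {S : ℝ}
    (hH : HasFDerivAt H H' x) (hS : S ≠ 0) (hnorm : ∀ᶠ z in 𝓝 x, ‖H z‖ = S) : H'.det = 0 := by
  have horth (v : E) : ⟪H x, H' v⟫ = 0 := by
    have hconst : HasFDerivAt (fun z => ‖H z‖ ^ 2) (0 : E →L[ℝ] ℝ) x :=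
      (hasFDerivAt_const (S ^ 2) x).congr_of_eventuallyEq (hnorm.mono fun z hz => by simp [hz])
    simpa using (DFunLike.congr_fun (hconst.unique hH.norm_sq) v).symm
  by_contra hdet
  obtain ⟨v, hv⟩ := (H'.toContinuousLinearEquivOfDetNeZero hdet).surjective (H x)
  rw [ContinuousLinearMap.toContinuousLinearEquivOfDetNeZero_apply] at hv
  have hx : ‖H x‖ = 0 := by simpa [hv] using horth v
  exact hS (hnorm.self_of_nhds.symm.trans hx)

lemma exists_mem_sphere_ne_of_contDiffOn {H : E → E} {S : ℝ} (hS : 0 < S)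
    (hH : ContDiffOn ℝ 1 H (closedBall 0 S)) (hmaps : MapsTo H (closedBall 0 S) (sphere 0 S)) :
    ∃ x ∈ sphere 0 S, H x ≠ x := by
  by_contra! hid
  borelize E
  obtain ⟨K, hK⟩ := (hH.sub contDiffOn_id).exists_lipschitzOnWith one_ne_zero
    (convex_closedBall _ _) (isCompact_closedBall _ _)
  set g : E → E := (closedBall 0 S).indicator fun x => H x - x
  have hg : LipschitzWith K g := lipschitzWith_indicator_of_eq_zero_on_frontier hK
    isClosed_closedBall fun x hx =>
      sub_eq_zero.2 (hid x (by rwa [frontier_closedBall _ hS.ne'] at hx))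
  have hsupp : ∀ x ∉ ball 0 S, g x = 0 := fun x hx => by
    by_cases hx' : x ∈ closedBall 0 S
    · have : x ∈ sphere 0 S := by rw [← closedBall_sdiff_ball]; exact ⟨hx', hx⟩
      simp [g, hid x this]
    · exact indicator_of_notMem hx' _
  have hderiv : ∀ x ∈ ball 0 S, HasFDerivAt g (fderiv ℝ H x - 1) x := fun x hx => by
    have hnhds : closedBall 0 S ∈ 𝓝 x := closedBall_mem_nhds_of_mem hx
    exact (((hH.contDiffAt hnhds).differentiableAt one_ne_zero).hasFDerivAt.sub
      (hasFDerivAt_id x)).congr_of_eventuallyEq (eqOn_indicator.eventuallyEq_of_mem hnhds)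
  have hdet : ∀ x ∈ ball 0 S, (1 + fderiv ℝ g x).det = 0 := fun x hx => by
    have hnhds : closedBall 0 S ∈ 𝓝 x := closedBall_mem_nhds_of_mem hx
    rw [(hderiv x hx).fderiv, add_sub_cancel]
    exact det_eq_zero_of_norm_eventually_const
      ((hH.contDiffAt hnhds).differentiableAt one_ne_zero).hasFDerivAt hS.ne' <|
      mem_of_superset hnhds fun z hz => mem_sphere_zero_iff_norm.1 (hmaps hz)
  have hvol := setIntegral_det_one_add_fderiv_of_lipschitzWith Measure.addHaar hg
    measurableSet_ball measure_ball_lt_top.ne hsupp fun x hx => (hderiv x hx).differentiableAt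
  rw [setIntegral_congr_fun measurableSet_ball hdet, integral_zero] at hvol
  have := (measureReal_eq_zero_iff measure_ball_lt_top.ne).1 hvol.symm
  exact (measure_ball_pos _ _ hS).ne' this

end Retraction

section Brouwer

lemma exists_isFixedPt_of_contDiff_of_norm_lt {E : Type*} [NormedAddCommGroup E]
    [InnerProductSpace ℝ E] [FiniteDimensional ℝ E] {Q : E → E} {R : ℝ} (hQ : ContDiff ℝ 1 Q)
    (hR : ∀ x, ‖Q x‖ < R) : ∃ x, IsFixedPt Q x := by
  by_contra! hfix
  have hR0 : 0 < R := (norm_nonneg _).trans_lt (hR 0)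
  let χ : ContDiffBump (0 : E) := ⟨R, R + 1, hR0, lt_add_one R⟩
  set G : E → E := fun x => x - χ x • Q x
  have hG : ContDiff ℝ 1 G := contDiff_id.sub (χ.contDiff.smul hQ)
  have hG0 : ∀ x, G x ≠ 0 := fun x hx => by
    have hx' : χ x • Q x = x := (sub_eq_zero.1 hx).symm
    have hxR : ‖x‖ ≤ R := by
      rw [← hx', norm_smul, Real.norm_of_nonneg χ.nonneg]
      exact (mul_le_of_le_one_left (norm_nonneg _) χ.le_one).trans (hR x).le
    rw [χ.one_of_mem_closedBall (mem_closedBall_zero_iff.2 hxR), one_smul] at hx'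
    exact hfix x hx'
  obtain ⟨x, hx, hne⟩ := exists_mem_sphere_ne_of_contDiffOn (S := R + 1)
    (H := fun x => ((R + 1) * ‖G x‖⁻¹) • G x) (by positivity)
    (fun x _ => ((contDiffAt_const.mul ((hG.contDiffAt.norm ℝ (hG0 x)).inv
      (norm_ne_zero_iff.2 (hG0 x)))).smul hG.contDiffAt).contDiffWithinAt)
    (fun x _ => by
      have := norm_ne_zero_iff.2 (hG0 x)
      rw [mem_sphere_zero_iff_norm, norm_smul, Real.norm_of_nonneg (by positivity)]
      field_simp)
  rw [mem_sphere_zero_iff_norm] at hx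
  have hGx : G x = x := by simp [G, χ.zero_of_le_dist (x := x) (by simp [χ, hx])]
  refine hne ?_
  simp only [hGx, hx]
  rw [mul_inv_cancel₀ (by positivity), one_smul]

theorem exists_isFixedPt_of_isBounded_range {E : Type*} [NormedAddCommGroup E] [NormedSpace ℝ E]
    [FiniteDimensional ℝ E] {P : E → E} (hP : Continuous P)
    (hbdd : Bornology.IsBounded (range P)) : ∃ x, IsFixedPt P x := by
  by_contra! hfix
  obtain ⟨Q, hQ, hQP, -⟩ := hP.exists_contDiff_approx 1 (ε := fun x => min 1 (dist x (P x)))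
    (by fun_prop) (fun x => lt_min one_pos (dist_pos.2 fun h => hfix x h.symm))
  have hQbdd : Bornology.IsBounded (range Q) := by
    refine hbdd.cthickening (δ := 1).subset (range_subset_iff.2 fun x => ?_)
    exact mem_cthickening_of_dist_le _ _ _ _ (mem_range_self x)
      ((hQP x).le.trans (min_le_left _ _))
  let e := toEuclidean (E := E)
  obtain ⟨R, hR⟩ := (e.lipschitz.isBounded_image hQbdd).exists_norm_le
  obtain ⟨z, hz⟩ := exists_isFixedPt_of_contDiff_of_norm_lt (Q := e ∘ Q ∘ e.symm) (R := R + 1)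
    (e.contDiff.comp (hQ.comp e.symm.contDiff))
    fun z => (hR _ (mem_image_of_mem _ (mem_range_self (e.symm z)))).trans_lt (lt_add_one R)
  have hfixQ : Q (e.symm z) = e.symm z := e.eq_symm_apply.2 hz
  have := (hQP (e.symm z)).trans_le (min_le_right _ _)
  rw [hfixQ] at this
  exact this.ne rfl

/-- The fixed-point property of a subset `K` of a topological space: every continuous self-map
of `K` has a fixed point. Self-maps of `K` are encoded as maps of the ambient space that are
continuous on `K` and send `K` to itself. -/
def FixedPointProperty {X : Type*} [TopologicalSpace X] (K : Set X) : Prop :=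
  ∀ P : X → X, ContinuousOn P K → MapsTo P K K → ∃ x ∈ K, IsFixedPt P x

lemma fixedPointProperty_of_retraction {E : Type*} [NormedAddCommGroup E] [NormedSpace ℝ E]
    [FiniteDimensional ℝ E] {K : Set E} (hK : IsCompact K) {r : E → E} (hr : Continuous r)
    (hrK : ∀ x, r x ∈ K) (hid : ∀ x ∈ K, r x = x) : FixedPointProperty K := by
  intro P hP hPK
  have hrange : range (P ∘ r) ⊆ K := range_subset_iff.2 fun x => hPK (hrK x)
  obtain ⟨x, hx⟩ := exists_isFixedPt_of_isBounded_range (hP.comp_continuous hr hrK)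
    (hK.isBounded.subset hrange)
  have hxK : x ∈ K := hrange ⟨x, hx⟩
  exact ⟨x, hxK, by simpa [IsFixedPt, hid x hxK] using hx⟩

end Brouwer

section Star

/-- `M` is strictly star-shaped about `p`: from every point of `M` the segment to `p` runs
through the interior of `M`, its starting point excepted. -/
def StrictStarConvex {E : Type*} [AddCommGroup E] [Module ℝ E] [TopologicalSpace E]
    (p : E) (M : Set E) : Prop :=
  ∀ x ∈ M, ∀ s ∈ Ioc (0 : ℝ) 1, AffineMap.lineMap x p s ∈ interior M

/-- The first time at which the segment from `x` to `p`, parametrized by `[0, 1]`, is in `M`, or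
the junk value `0` if it misses `M`. The point it reaches at that time is the image of `x` under
the retraction onto `M`. -/
noncomputable def entryTime {E : Type*} [AddCommGroup E] [Module ℝ E] (p : E) (M : Set E)
    (x : E) : ℝ :=
  sInf {s ∈ Icc (0 : ℝ) 1 | AffineMap.lineMap x p s ∈ M}

variable {E : Type*} [AddCommGroup E] [Module ℝ E] {p : E} {M : Set E} {x : E} {s : ℝ}

lemma entryTime_le (hs : s ∈ Icc (0 : ℝ) 1) (hx : AffineMap.lineMap x p s ∈ M) :
    entryTime p M x ≤ s :=
  csInf_le ⟨0, fun _ h => h.1.1⟩ ⟨hs, hx⟩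

lemma entryTime_eq_zero (hp : x ∈ M) : entryTime p M x = 0 :=
  le_antisymm (entryTime_le (by simp) (by simpa)) (Real.sInf_nonneg fun _ h => h.1.1)

variable [TopologicalSpace E]

lemma StrictStarConvex.lineMap_mem_interior (hstar : StrictStarConvex p M) {t : ℝ}
    (hs : AffineMap.lineMap x p s ∈ M) (hst : s < t) (ht : t ≤ 1) :
    AffineMap.lineMap x p t ∈ interior M := by
  have h1s : 0 < 1 - s := by linarith
  have hcomp : AffineMap.lineMap (AffineMap.lineMap x p s) p ((t - s) / (1 - s)) =
      AffineMap.lineMap x p t := by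
    simp only [AffineMap.lineMap_apply_module]
    match_scalars <;> field_simp <;> ring
  rw [← hcomp]
  exact hstar _ hs _ ⟨div_pos (sub_pos.2 hst) h1s, (div_le_one h1s).2 (by linarith)⟩

variable [IsTopologicalAddGroup E] [ContinuousSMul ℝ E]

lemma continuous_lineMap_left (p : E) :
    Continuous fun z : E × ℝ => AffineMap.lineMap z.1 p z.2 := by
  simp only [AffineMap.lineMap_apply_module]
  fun_prop

lemma entryTime_mem (hM : IsClosed M) (hp : p ∈ M) (x : E) :
    entryTime p M x ∈ Icc (0 : ℝ) 1 ∧ AffineMap.lineMap x p (entryTime p M x) ∈ M := by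
  have hclosed : IsClosed {s ∈ Icc (0 : ℝ) 1 | AffineMap.lineMap x p s ∈ M} :=
    isClosed_Icc.inter (hM.preimage AffineMap.lineMap_continuous)
  exact hclosed.csInf_mem ⟨1, by simp, by simpa⟩ ⟨0, fun _ h => h.1.1⟩

lemma StrictStarConvex.continuous_entryTime (hstar : StrictStarConvex p M) (hM : IsClosed M)
    (hp : p ∈ M) : Continuous (entryTime p M) := by
  refine continuous_iff_continuousAt.2 fun x => tendsto_order.2 ⟨fun a ha => ?_, fun a ha => ?_⟩
  · have hout : ∀ᶠ y in 𝓝 x, ∀ s ∈ Icc 0 a, AffineMap.lineMap y p s ∉ M := by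
      refine isCompact_Icc.eventually_forall_of_forall_eventually fun s hs => ?_
      refine (continuous_lineMap_left p).continuousAt.eventually
        (hM.isOpen_compl.mem_nhds fun hmem => ?_)
      exact ((entryTime_le ⟨hs.1, hs.2.trans (ha.le.trans (entryTime_mem hM hp x).1.2)⟩
        hmem).trans hs.2).not_gt ha
    filter_upwards [hout] with y hy
    obtain ⟨hmem, hyM⟩ := entryTime_mem hM hp y
    exact not_le.1 fun hle => hy _ ⟨hmem.1, hle⟩ hyM
  · obtain ⟨hmem, hxM⟩ := entryTime_mem hM hp x
    rcases lt_or_ge 1 a with h1a | ha1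
    · exact Eventually.of_forall fun y => (entryTime_mem hM hp y).1.2.trans_lt h1a
    · obtain ⟨s, hs, hsa⟩ := exists_between ha
      have hinterior := hstar.lineMap_mem_interior hxM hs (hsa.le.trans ha1)
      have hnear : ∀ᶠ y in 𝓝 x, AffineMap.lineMap y p s ∈ interior M :=
        ((continuous_lineMap_left p).comp (Continuous.prodMk_left s)).continuousAt.eventually
          (isOpen_interior.mem_nhds hinterior)
      filter_upwards [hnear] with y hy
      exact (entryTime_le ⟨hmem.1.trans hs.le, hsa.le.trans ha1⟩ (interior_subset hy)).trans_lt hsa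

lemma StrictStarConvex.exists_retraction (hstar : StrictStarConvex p M) (hM : IsClosed M)
    (hp : p ∈ M) : ∃ r : E → E, Continuous r ∧ (∀ x, r x ∈ M) ∧ ∀ x ∈ M, r x = x :=
  ⟨fun x => AffineMap.lineMap x p (entryTime p M x),
    (continuous_lineMap_left p).comp (continuous_id.prodMk (hstar.continuous_entryTime hM hp)),
    fun x => (entryTime_mem hM hp x).2, fun x hx => by simp [entryTime_eq_zero hx]⟩

end Star

lemma StrictStarConvex.fixedPointProperty {E : Type*} [NormedAddCommGroup E] [NormedSpace ℝ E]
    [FiniteDimensional ℝ E] {p : E} {M : Set E} (hstar : StrictStarConvex p M)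
    (hM : IsCompact M) (hp : p ∈ M) : FixedPointProperty M := by
  obtain ⟨r, hr, hrM, hid⟩ := hstar.exists_retraction hM.isClosed hp
  exact fixedPointProperty_of_retraction hM hr hrM hid

section Sublevel

lemma lt_of_hasDerivWithinAt_neg_of_eq {φ φ' : ℝ → ℝ} {a b c : ℝ}
    (hφ : ∀ t ∈ Icc a b, HasDerivWithinAt φ (φ' t) (Icc a b) t)
    (hneg : ∀ t ∈ Icc a b, φ t = c → φ' t < 0) (ha : φ a ≤ c) {t : ℝ} (ht : t ∈ Ioc a b) :
    φ t < c := by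
  have hle : ∀ s ∈ Icc a b, φ s ≤ c :=
    image_le_of_deriv_right_lt_deriv_boundary' (B := fun _ => c) (B' := fun _ => 0)
      (fun s hs => (hφ s hs).continuousWithinAt)
      (fun s hs => (hφ s (Ico_subset_Icc_self hs)).mono_of_mem_nhdsWithin
        (Icc_mem_nhdsGE_of_mem hs))
      ha continuousOn_const (fun _ _ => hasDerivWithinAt_const ..)
      fun s hs => hneg s (Ico_subset_Icc_self hs)
  have htI := Ioc_subset_Icc_self ht
  refine (hle t htI).lt_of_ne fun heq => ?_
  have hmax : IsLocalMaxOn φ (Icc a b) t :=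
    IsMaxOn.localize fun s hs => (hle s hs).trans_eq heq.symm
  have hcone : a - t ∈ posTangentConeAt (Icc a b) t := sub_mem_posTangentConeAt_of_segment_subset
    ((convex_Icc a b).segment_subset htI (left_mem_Icc.2 (ht.1.le.trans ht.2)))
  have hderiv : (a - t) * φ' t ≤ 0 := by
    simpa using hmax.hasFDerivWithinAt_nonpos (hφ t htI).hasFDerivWithinAt hcone
  exact (mul_pos_of_neg_of_neg (sub_neg.2 ht.1) (hneg t htI heq)).not_ge hderiv

variable {E : Type*} [NormedAddCommGroup E] [NormedSpace ℝ E] {V : E → ℝ} {p : E} {c : ℝ}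

lemma lineMap_lt_of_fderiv_sub_neg (hV : Differentiable ℝ V)
    (hrad : ∀ u, V u = c → fderiv ℝ V u (p - u) < 0) {x : E} (hx : V x ≤ c) {s : ℝ}
    (hs : s ∈ Ioc (0 : ℝ) 1) : V (AffineMap.lineMap x p s) < c := by
  refine lt_of_hasDerivWithinAt_neg_of_eq (φ := fun s => V (AffineMap.lineMap x p s))
    (φ' := fun s => fderiv ℝ V (AffineMap.lineMap x p s) (p - x)) (fun t _ => ?_)
    (fun t ht hc => ?_) (by simpa using hx) hs
  · exact ((hV _).hasFDerivAt.comp_hasDerivAt t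
      AffineMap.hasDerivAt_lineMap).hasDerivWithinAt
  · have hdir : p - AffineMap.lineMap x p t = (1 - t) • (p - x) := by
      rw [AffineMap.lineMap_apply_module]; module
    have := hrad _ hc
    rw [hdir, map_smul, smul_eq_mul] at this
    exact neg_of_mul_neg_right this (by linarith [ht.2])

lemma strictStarConvex_sublevel (hV : Differentiable ℝ V)
    (hrad : ∀ u, V u = c → fderiv ℝ V u (p - u) < 0) : StrictStarConvex p {u | V u ≤ c} :=
  fun _ hx _ hs => lt_subset_interior_le hV.continuous continuous_const
    (lineMap_lt_of_fderiv_sub_neg hV hrad hx hs)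

lemma exists_mem_sphere_lineMap_eq {u : E} (hu : u ≠ p) {ρ : ℝ} (hρ : dist u p < ρ) :
    ∃ z ∈ sphere p ρ, ∃ s ∈ Ioo (0 : ℝ) 1, AffineMap.lineMap z p s = u := by
  have hpos : 0 < dist u p := dist_pos.2 hu
  have hρ0 : 0 < ρ := hpos.trans hρ
  refine ⟨AffineMap.lineMap p u (ρ / dist u p), ?_, 1 - dist u p / ρ, ⟨?_, ?_⟩, ?_⟩
  · rw [mem_sphere, dist_lineMap_left, dist_comm p, Real.norm_of_nonneg (by positivity),
      div_mul_cancel₀ _ hpos.ne']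
  · exact sub_pos.2 ((div_lt_one hρ0).2 hρ)
  · rw [sub_lt_self_iff]; positivity
  · simp only [AffineMap.lineMap_apply_module]
    match_scalars <;> field_simp <;> ring

lemma isCompact_sublevel_of_fderiv_sub_neg [FiniteDimensional ℝ E] (hE : 1 < Module.rank ℝ E)
    (hV : Differentiable ℝ V) (hrad : ∀ u, V u = c → fderiv ℝ V u (p - u) < 0)
    (hbdd : Bornology.IsBounded (V ⁻¹' {c})) (hne : (V ⁻¹' {c}).Nonempty) :
    IsCompact {u | V u ≤ c} := by
  obtain ⟨u, hu⟩ := hne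
  obtain ⟨R, hR⟩ := hbdd.subset_closedBall p
  refine (isCompact_closedBall p R).of_isClosed_subset
    (isClosed_le hV.continuous continuous_const) fun x hx =>
      mem_closedBall.2 (not_lt.1 fun hRx => ?_)
  have hlevel : ∀ y ∈ sphere p (dist x p), V y ≠ c := fun y hy hc =>
    ((mem_closedBall.1 (hR hc)).trans_lt hRx).ne hy
  have hsphere : ∀ y ∈ sphere p (dist x p), V y < c := fun y hy => by
    by_contra! hcy
    obtain ⟨w, hw, hwc⟩ := (isConnected_sphere hE p dist_nonneg).isPreconnected.intermediate_value
      (mem_sphere.2 rfl) hy hV.continuous.continuousOn ⟨hx, hcy⟩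
    exact hlevel w hw hwc
  have hup : u ≠ p := by
    rintro rfl
    simpa using hrad u hu
  obtain ⟨z, hz, s, hs, rfl⟩ := exists_mem_sphere_lineMap_eq hup
    ((mem_closedBall.1 (hR hu)).trans_lt hRx)
  exact (lineMap_lt_of_fderiv_sub_neg hV hrad (hsphere z hz).le (Ioo_subset_Ioc_self hs)).ne hu

end Sublevel

section Approximation

lemma exists_dist_lt_apply_neg {E : Type*} [SeminormedAddCommGroup E] [NormedSpace ℝ E]
    {A : E →L[ℝ] ℝ} {u w : E} (hu : A u ≤ 0) (hw : A w < 0) {ε : ℝ} (hε : 0 < ε) :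
    ∃ v, dist v u < ε ∧ A v < 0 := by
  have htends : Tendsto (fun δ : ℝ => u + δ • w) (𝓝[>] 0) (𝓝 u) :=
    (Continuous.tendsto' (by fun_prop) 0 _ (by simp)).mono_left nhdsWithin_le_nhds
  obtain ⟨δ, hδ, hδ0⟩ :=
    ((htends.eventually (ball_mem_nhds _ hε)).and self_mem_nhdsWithin).exists
  refine ⟨u + δ • w, hδ, ?_⟩
  rw [map_add, map_smul, smul_eq_mul]
  exact add_neg_of_nonpos_of_neg hu (mul_neg_of_pos_of_neg hδ0 hw)

lemma exists_contDiff_dist_lt_forall_neg {X E : Type*} [NormedAddCommGroup X] [NormedSpace ℝ X]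
    [FiniteDimensional ℝ X] [NormedAddCommGroup E] [NormedSpace ℝ E] (n : ℕ∞) {S L : Set X}
    (hS : IsClosed S) (hL : IsClosed L) {F : X → E} (hF : ContinuousOn F S)
    {A : X → E →L[ℝ] ℝ} (hA : ContinuousOn A L) (hAF : ∀ x ∈ L, A x (F x) ≤ 0)
    (hAneg : ∀ x ∈ L, ∃ v, A x v < 0) {ε : ℝ} (hε : 0 < ε) :
    ∃ g : X → E, ContDiff ℝ n g ∧ (∀ x ∈ S, dist (g x) (F x) < ε) ∧ ∀ x ∈ L, A x (g x) < 0 := by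
  let U : X → Set E := fun x => {v | (x ∈ S → dist v (F x) < ε) ∧ (x ∈ L → A x v < 0)}
  have hconvex : ∀ x, Convex ℝ (U x) := fun x =>
    (show Convex ℝ {v | x ∈ S → dist v (F x) < ε} by
      by_cases hx : x ∈ S
      · simp only [hx, true_imp_iff]
        exact convex_ball (F x) ε
      · simpa [hx] using convex_univ).inter <|
    show Convex ℝ {v | x ∈ L → A x v < 0} by
      by_cases hx : x ∈ L
      · simpa [hx] using convex_halfSpace_lt (A x).isLinear 0
      · simpa [hx] using convex_univ
  have hpoint : ∀ x, ∃ v, v ∈ U x := fun x => by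
    by_cases hx : x ∈ L
    · obtain ⟨w, hw⟩ := hAneg x hx
      obtain ⟨v, hv, hAv⟩ := exists_dist_lt_apply_neg (hAF x hx) hw hε
      exact ⟨v, fun _ => hv, fun _ => hAv⟩
    · exact ⟨F x, fun _ => by simpa, fun h => absurd h hx⟩
  have hlocal : ∀ x, ∃ v, ∀ᶠ y in 𝓝 x, v ∈ U y := fun x => by
    obtain ⟨v, hvS, hvL⟩ := hpoint x
    refine ⟨v, .and ?_ ?_⟩
    · by_cases hx : x ∈ S
      · exact eventually_nhdsWithin_iff.1 <|
          (continuousWithinAt_const.dist (hF x hx)).eventually_lt_const (hvS hx)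
      · filter_upwards [hS.isOpen_compl.mem_nhds hx] with y hy h using absurd h hy
    · by_cases hx : x ∈ L
      · exact eventually_nhdsWithin_iff.1 <|
          ((hA x hx).clm_apply continuousWithinAt_const).eventually_lt_const (hvL hx)
      · filter_upwards [hL.isOpen_compl.mem_nhds hx] with y hy h using absurd h hy
  obtain ⟨g, hg⟩ := exists_contMDiffMap_forall_mem_convex_of_local_const 𝓘(ℝ, X) (n := n)
    hconvex hlocal
  exact ⟨g, g.contMDiff.contDiff, fun x hx => (hg x).1 hx, fun x hx => (hg x).2 hx⟩

end Approximation

section Flow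

variable {E : Type*} [NormedAddCommGroup E] [NormedSpace ℝ E] {T : ℝ}

lemma exists_flow_of_contDiff_of_hasCompactSupport [CompleteSpace E] {g : ℝ × E → E}
    (hg : ContDiff ℝ 1 g) (hsupp : HasCompactSupport g) (hT : 0 ≤ T) (r : ℝ≥0) :
    ∃ α : E → ℝ → E, (∀ x ∈ closedBall 0 (r : ℝ), α x 0 = x ∧
      ∀ t ∈ Icc 0 T, HasDerivWithinAt (α x) (g (t, α x t)) (Icc 0 T) t) ∧
      ContinuousOn (fun x => α x T) (closedBall 0 r) := by
  obtain ⟨K, hK⟩ := hg.lipschitzWith_of_hasCompactSupport hsupp one_ne_zero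
  obtain ⟨C, hC⟩ := hsupp.exists_bound_of_continuous hg.continuous
  lift C to ℝ≥0 using (norm_nonneg _).trans (hC 0)
  lift T to ℝ≥0 using hT
  have hpicard : IsPicardLindelof (fun t x => g (t, x)) (⟨0, left_mem_Icc.2 T.2⟩ : Icc 0 (T : ℝ))
      0 (r + C * T) r C K :=
    { lipschitzOnWith := fun t _ => by
        simpa [comp_def] using (hK.comp (LipschitzWith.prodMk_left t)).lipschitzOnWith
      continuousOn := fun x _ => (hg.continuous.comp (Continuous.prodMk_left x)).continuousOn
      norm_le := fun t _ x _ => hC (t, x)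
      mul_max_le := by simp }
  obtain ⟨α, hα, L, hL⟩ :=
    hpicard.exists_forall_mem_closedBall_eq_hasDerivWithinAt_lipschitzOnWith
  exact ⟨α, hα, (hL T (right_mem_Icc.2 T.2)).continuousOn⟩

variable [FiniteDimensional ℝ E]

lemma exists_contDiff_hasCompactSupport_eqOn {F : Type*} [NormedAddCommGroup F] [NormedSpace ℝ F]
    {g : E → F} {n : ℕ∞} (hg : ContDiff ℝ n g) {S : Set E} (hS : IsCompact S) :
    ∃ g' : E → F, ContDiff ℝ n g' ∧ HasCompactSupport g' ∧ EqOn g' g S := by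
  obtain ⟨R, hR0, hR⟩ := hS.isBounded.subset_closedBall_lt 0 0
  let χ : ContDiffBump (0 : E) := ⟨R, R + 1, hR0, lt_add_one R⟩
  exact ⟨fun x => χ x • g x, χ.contDiff.smul hg, χ.hasCompactSupport.smul_right,
    fun x hx => by simp [χ.one_of_mem_closedBall (hR hx)]⟩

lemma exists_periodic_of_fixedPointProperty_sublevel {V : E → ℝ} {c : ℝ} (hV : Differentiable ℝ V)
    (hcomp : IsCompact {u | V u ≤ c}) (hfpp : FixedPointProperty {u | V u ≤ c}) (hT : 0 ≤ T)
    {g : ℝ × E → E} (hg : ContDiff ℝ 1 g)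
    (hinward : ∀ t ∈ Icc 0 T, ∀ u, V u = c → fderiv ℝ V u (g (t, u)) < 0) :
    ∃ x : ℝ → E, (∀ t ∈ Icc 0 T, HasDerivWithinAt x (g (t, x t)) (Icc 0 T) t) ∧
      x 0 = x T ∧ ∀ t ∈ Icc 0 T, V (x t) ≤ c := by
  obtain ⟨g', hg', hsupp, heq⟩ := exists_contDiff_hasCompactSupport_eqOn (n := 1) hg
    (isCompact_Icc (a := (0 : ℝ)) (b := T) |>.prod hcomp)
  obtain ⟨r, hr0, hr⟩ := hcomp.isBounded.subset_closedBall_lt 0 0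
  lift r to ℝ≥0 using hr0.le
  obtain ⟨α, hα, hcont⟩ := exists_flow_of_contDiff_of_hasCompactSupport hg' hsupp hT r
  have hinvariant : ∀ x, V x ≤ c → ∀ t ∈ Icc 0 T, V (α x t) ≤ c := fun x hx t ht => by
    obtain ⟨hα0, hαderiv⟩ := hα x (hr hx)
    rcases ht.1.eq_or_lt with rfl | ht0
    · rwa [hα0]
    · refine (lt_of_hasDerivWithinAt_neg_of_eq (φ := V ∘ α x)
        (fun s hs => (hV _).hasFDerivAt.comp_hasDerivWithinAt s (hαderiv s hs))
        (fun s hs hc => ?_) (by simpa [hα0]) ⟨ht0, ht.2⟩).le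
      rw [heq (mk_mem_prod hs (le_of_eq hc))]
      exact hinward s hs _ hc
  obtain ⟨x, hx, hfix⟩ := hfpp (fun x => α x T) (hcont.mono hr)
    fun x hx => hinvariant x hx T (right_mem_Icc.2 hT)
  obtain ⟨hα0, hαderiv⟩ := hα x (hr hx)
  refine ⟨α x, fun t ht => ?_, hα0.trans hfix.symm, hinvariant x hx⟩
  rw [← heq (mk_mem_prod ht (hinvariant x hx t ht))]
  exact hαderiv t ht

end Flow

section Limit

lemma tendsto_prod_nhdsWithin_of_lipschitzOnWith {ι X Y : Type*} [PseudoMetricSpace X]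
    [PseudoMetricSpace Y] {l : Filter ι} {x : ι → X → Y} {s : Set X} {t₀ : X} {a : Y} {C : ℝ≥0}
    (ht₀ : t₀ ∈ s) (hlip : ∀ᶠ i in l, LipschitzOnWith C (x i) s)
    (hlim : Tendsto (fun i => x i t₀) l (𝓝 a)) :
    Tendsto (fun q : ι × X => x q.1 q.2) (l ×ˢ 𝓝[s] t₀) (𝓝 a) := by
  have hfst : Tendsto (fun q : ι × X => x q.1 t₀) (l ×ˢ 𝓝[s] t₀) (𝓝 a) := hlim.comp tendsto_fst
  have hsnd : Tendsto (fun q : ι × X => C * dist t₀ q.2) (l ×ˢ 𝓝[s] t₀) (𝓝 0) := by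
    have hid : Tendsto Prod.snd (l ×ˢ 𝓝[s] t₀) (𝓝 t₀) :=
      tendsto_snd.mono_right nhdsWithin_le_nhds
    simpa using ((tendsto_const_nhds (x := t₀)).dist hid).const_mul (C : ℝ)
  refine tendsto_of_tendsto_of_dist hfst (squeeze_zero' (.of_forall fun _ => dist_nonneg) ?_ hsnd)
  filter_upwards [hlip.prod_mk self_mem_nhdsWithin] with q hq
  exact hq.1.dist_le_mul t₀ ht₀ q.2 hq.2

variable {ι E : Type*} [NormedAddCommGroup E] [NormedSpace ℝ E] {l : Filter ι}
  {x x' : ι → ℝ → E} {y : ℝ → E} {s : Set ℝ}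

lemma hasDerivWithinAt_of_tendsto_prod_nhdsWithin [l.NeBot] {t₀ : ℝ} {v : E} (hs : Convex ℝ s)
    (ht₀ : t₀ ∈ s) (hderiv : ∀ i, ∀ t ∈ s, HasDerivWithinAt (x i) (x' i t) s t)
    (hlim : ∀ t ∈ s, Tendsto (fun i => x i t) l (𝓝 (y t)))
    (hlim' : Tendsto (fun q : ι × ℝ => x' q.1 q.2) (l ×ˢ 𝓝[s] t₀) (𝓝 v)) :
    HasDerivWithinAt y v s t₀ := by
  refine hasDerivWithinAt_iff_isLittleO.2 (Asymptotics.isLittleO_iff.2 fun ε hε => ?_)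
  obtain ⟨A, hA, U, hU, hAU⟩ := mem_prod_iff.1 (hlim' (closedBall_mem_nhds v hε))
  obtain ⟨δ, hδ, hball⟩ := mem_nhdsWithin_iff.1 hU
  have hmean : ∀ i ∈ A, ∀ t ∈ ball t₀ δ ∩ s,
      ‖x i t - x i t₀ - (t - t₀) • v‖ ≤ ε * ‖t - t₀‖ := fun i hi t ht => by
    have hdiff : ∀ r ∈ ball t₀ δ ∩ s,
        HasDerivWithinAt (fun r => x i r - r • v) (x' i r - v) (ball t₀ δ ∩ s) r := fun r hr => by
      simpa only [one_smul, id] using ((hderiv i r hr.2).mono inter_subset_right).fun_sub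
        ((hasDerivWithinAt_id r _).smul_const v)
    have := ((convex_ball t₀ δ).inter hs).norm_image_sub_le_of_norm_hasDerivWithin_le hdiff
      (fun r hr => mem_closedBall_iff_norm.1 (hAU (mk_mem_prod hi (hball hr))))
      ⟨mem_ball_self hδ, ht₀⟩ ht
    convert this using 2
    module
  filter_upwards [inter_mem (mem_nhdsWithin_of_mem_nhds (ball_mem_nhds t₀ hδ))
    self_mem_nhdsWithin] with t ht
  exact le_of_tendsto (((hlim t ht.2).sub (hlim t₀ ht₀)).sub_const _).norm
    (mem_of_superset hA fun i hi => hmean i hi t ht)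

lemma exists_eventually_lipschitzOnWith_of_approx {f : ℝ × E → E} {M : Set E} (hs : Convex ℝ s)
    (hsc : IsCompact s) (hM : IsCompact M) (hf : ContinuousOn f (s ×ˢ M))
    (hderiv : ∀ i, ∀ t ∈ s, HasDerivWithinAt (x i) (x' i t) s t)
    (hmem : ∀ i, ∀ t ∈ s, x i t ∈ M)
    (happrox : Tendsto (fun q : ι × ℝ => dist (f (q.2, x q.1 q.2)) (x' q.1 q.2))
      (l ×ˢ 𝓟 s) (𝓝 0)) :
    ∃ C : ℝ≥0, ∀ᶠ i in l, LipschitzOnWith C (x i) s := by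
  obtain ⟨C, hC⟩ := (hsc.prod hM).exists_bound_of_continuousOn hf
  refine ⟨(C + 1).toNNReal, ?_⟩
  filter_upwards [eventually_prod_principal_iff.1 (happrox.eventually_le_const one_pos)] with i hi
  refine hs.lipschitzOnWith_of_nnnorm_hasDerivWithin_le (hderiv i) fun t ht => ?_
  refine NNReal.le_toNNReal_of_coe_le ?_
  calc ‖x' i t‖ ≤ ‖f (t, x i t)‖ + dist (f (t, x i t)) (x' i t) := by
        rw [dist_comm, dist_eq_norm]; exact norm_le_norm_add_norm_sub' _ _
    _ ≤ C + 1 := add_le_add (hC _ (mk_mem_prod ht (hmem i t ht))) (hi t ht)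

lemma hasDerivWithinAt_of_tendsto_approx_solutions [l.NeBot] {f : ℝ × E → E} {M : Set E}
    (hs : Convex ℝ s) (hsc : IsCompact s) (hM : IsCompact M) (hf : ContinuousOn f (s ×ˢ M))
    (hderiv : ∀ i, ∀ t ∈ s, HasDerivWithinAt (x i) (x' i t) s t)
    (hmem : ∀ i, ∀ t ∈ s, x i t ∈ M)
    (happrox : Tendsto (fun q : ι × ℝ => dist (f (q.2, x q.1 q.2)) (x' q.1 q.2))
      (l ×ˢ 𝓟 s) (𝓝 0))
    (hlim : ∀ t ∈ s, Tendsto (fun i => x i t) l (𝓝 (y t))) {t₀ : ℝ} (ht₀ : t₀ ∈ s) :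
    HasDerivWithinAt y (f (t₀, y t₀)) s t₀ := by
  obtain ⟨C, hC⟩ := exists_eventually_lipschitzOnWith_of_approx hs hsc hM hf hderiv hmem happrox
  have hyM : y t₀ ∈ M :=
    hM.isClosed.mem_of_tendsto (hlim t₀ ht₀) (.of_forall fun i => hmem i t₀ ht₀)
  have hgraph : Tendsto (fun q : ι × ℝ => (q.2, x q.1 q.2)) (l ×ˢ 𝓝[s] t₀)
      (𝓝[s ×ˢ M] (t₀, y t₀)) := by
    refine tendsto_nhdsWithin_iff.2 ⟨(tendsto_snd.mono_right nhdsWithin_le_nhds).prodMk_nhds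
      (tendsto_prod_nhdsWithin_of_lipschitzOnWith ht₀ hC (hlim t₀ ht₀)), ?_⟩
    filter_upwards [tendsto_snd.eventually self_mem_nhdsWithin] with q hq
    exact ⟨hq, hmem q.1 q.2 hq⟩
  refine hasDerivWithinAt_of_tendsto_prod_nhdsWithin hs ht₀ hderiv hlim ?_
  exact tendsto_of_tendsto_of_dist ((hf _ ⟨ht₀, hyM⟩).tendsto.comp hgraph)
    (happrox.mono_left (prod_mono_right _ inf_le_right))

end Limit

lemma exists_periodic_solution_of_forall_approx {E : Type*} [NormedAddCommGroup E]
    [NormedSpace ℝ E] {T : ℝ} (hT : 0 ≤ T) {f : ℝ × E → E} {M : Set E} (hM : IsCompact M)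
    (hf : ContinuousOn f (Icc 0 T ×ˢ M))
    (happrox : ∀ ε > 0, ∃ x x' : ℝ → E,
      (∀ t ∈ Icc 0 T, HasDerivWithinAt x (x' t) (Icc 0 T) t) ∧ x 0 = x T ∧
      (∀ t ∈ Icc 0 T, x t ∈ M) ∧ ∀ t ∈ Icc 0 T, dist (f (t, x t)) (x' t) < ε) :
    ∃ y : ℝ → E, (∀ t ∈ Icc 0 T, HasDerivWithinAt y (f (t, y t)) (Icc 0 T) t) ∧
      y 0 = y T ∧ ∀ t ∈ Icc 0 T, y t ∈ M := by
  choose x x' hderiv hper hmem hdist using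
    fun n : ℕ => happrox (1 / (n + 1)) Nat.one_div_pos_of_nat
  have hlim : ∀ t ∈ Icc 0 T, ∃ a ∈ M, Tendsto (fun n => x n t) (hyperfilter ℕ) (𝓝 a) :=
    fun t ht => hM.ultrafilter_le_nhds' ((hyperfilter ℕ).map fun n => x n t)
      (mem_map.2 (univ_mem' fun n => hmem n t ht))
  choose! y hyM hy using hlim
  have h0 : (0 : ℝ) ∈ Icc 0 T := left_mem_Icc.2 hT
  have hT' : T ∈ Icc 0 T := right_mem_Icc.2 hT
  refine ⟨y, fun t ht => ?_, tendsto_nhds_unique (hy 0 h0) (by simpa only [hper] using hy T hT'),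
    hyM⟩
  have herror : Tendsto (fun q : ℕ × ℝ => 1 / ((q.1 : ℝ) + 1))
      ((hyperfilter ℕ : Filter ℕ) ×ˢ 𝓟 (Icc 0 T)) (𝓝 0) :=
    (tendsto_one_div_add_atTop_nhds_zero_nat.mono_left Nat.hyperfilter_le_atTop).comp tendsto_fst
  refine hasDerivWithinAt_of_tendsto_approx_solutions (convex_Icc 0 T) isCompact_Icc hM hf hderiv
    hmem (squeeze_zero' (.of_forall fun _ => dist_nonneg) ?_ herror) hy ht
  exact eventually_prod_principal_iff.2 (.of_forall fun n t ht => (hdist n t ht).le)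

theorem periodic_solution_in_star_shaped_sublevel_set_general {E : Type*} [NormedAddCommGroup E]
    [NormedSpace ℝ E] [FiniteDimensional ℝ E] {T : ℝ} (hT : 0 ≤ T) {f : ℝ → E → E} {V : E → ℝ}
    {p : E} {c : ℝ} (hf : ContinuousOn (fun q : ℝ × E => f q.1 q.2) (Icc 0 T ×ˢ {u | V u ≤ c}))
    (hV : ContDiff ℝ 1 V) (hpc : V p ≤ c) (hcomp : IsCompact {u | V u ≤ c})
    (hrad : ∀ u, V u = c → fderiv ℝ V u (p - u) < 0)
    (hsub : ∀ t ∈ Icc 0 T, ∀ u, V u = c → fderiv ℝ V u (f t u) ≤ 0) :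
    ∃ y : ℝ → E, (∀ t ∈ Icc 0 T, HasDerivWithinAt y (f t (y t)) (Icc 0 T) t) ∧
      y 0 = y T ∧ ∀ t ∈ Icc 0 T, V (y t) ≤ c := by
  have hVdiff : Differentiable ℝ V := hV.differentiable one_ne_zero
  have hfpp := (strictStarConvex_sublevel hVdiff hrad).fixedPointProperty hcomp hpc
  refine exists_periodic_solution_of_forall_approx (f := fun q => f q.1 q.2) hT hcomp hf
    fun ε hε => ?_
  obtain ⟨g, hg, hgf, hgneg⟩ := exists_contDiff_dist_lt_forall_neg 1
    (isClosed_Icc.prod hcomp.isClosed)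
    (isClosed_Icc.prod (isClosed_singleton.preimage hV.continuous)) hf
    (L := Icc 0 T ×ˢ (V ⁻¹' {c})) (A := fun q => fderiv ℝ V q.2)
    ((hV.continuous_fderiv one_ne_zero).comp continuous_snd).continuousOn
    (fun q hq => hsub q.1 hq.1 q.2 hq.2) (fun q hq => ⟨p - q.2, hrad q.2 hq.2⟩) hε
  obtain ⟨x, hx, hper, hxc⟩ := exists_periodic_of_fixedPointProperty_sublevel hVdiff hcomp hfpp hT
    hg fun t ht u hu => hgneg (t, u) ⟨ht, hu⟩
  refine ⟨x, _, hx, hper, hxc, fun t ht => ?_⟩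
  rw [dist_comm]
  exact hgf (t, x t) ⟨ht, hxc t ht⟩

/-- Corollary 3.2. Let `N ≥ 2`, `f : [0,T] × ℝ^N → ℝ^N` continuous,
`V : ℝ^N → ℝ` of class `C¹`, `V p < c`, with `V⁻¹(c)` bounded and nonempty,
`⟪∇V(u), p - u⟫ < 0` and `⟪f(t,u), ∇V(u)⟫ ≤ 0` on `V⁻¹(c)`. Then `ẏ = f(t,y)` has a
`T`-periodic solution with values in the sub-level set `{V ≤ c}`. -/
theorem periodic_solution_in_star_shaped_sublevel_set
    {N : ℕ} (hN : 2 ≤ N) {T : ℝ} (hT : 0 < T)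
    (f : ℝ → EuclideanSpace ℝ (Fin N) → EuclideanSpace ℝ (Fin N))
    (hf : ContinuousOn (fun p : ℝ × EuclideanSpace ℝ (Fin N) => f p.1 p.2)
      (Icc (0 : ℝ) T ×ˢ (univ : Set (EuclideanSpace ℝ (Fin N)))))
    (V : EuclideanSpace ℝ (Fin N) → ℝ) (hV : ContDiff ℝ 1 V)
    (p : EuclideanSpace ℝ (Fin N)) (c : ℝ) (hpc : V p < c)
    (hbdd : Bornology.IsBounded (V ⁻¹' {c})) (hlevne : (V ⁻¹' {c}).Nonempty)
    (hrad : ∀ u ∈ V ⁻¹' {c}, ⟪gradient V u, p - u⟫ < 0)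
    (hsub : ∀ u ∈ V ⁻¹' {c}, ∀ t ∈ Icc (0 : ℝ) T, ⟪f t u, gradient V u⟫ ≤ 0) :
    ∃ y : ℝ → EuclideanSpace ℝ (Fin N),
      (∀ t ∈ Icc (0 : ℝ) T, HasDerivWithinAt y (f t (y t)) (Icc (0 : ℝ) T) t) ∧
      y 0 = y T ∧
      (∀ t ∈ Icc (0 : ℝ) T, V (y t) ≤ c) := by
  have hrank : 1 < Module.rank ℝ (EuclideanSpace ℝ (Fin N)) := by
    rw [← Module.finrank_eq_rank, finrank_euclideanSpace_fin]
    exact_mod_cast hN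
  simp only [inner_gradient_left, inner_gradient_right] at hrad hsub
  exact periodic_solution_in_star_shaped_sublevel_set_general hT.le
    (hf.mono (prod_mono_right (subset_univ _))) hV hpc.le
    (isCompact_sublevel_of_fderiv_sub_neg hrank (hV.differentiable one_ne_zero) hrad hbdd hlevne)
    hrad fun t ht u hu => hsub u hu t ht
end

section
/- Let Ω ⊆ ℝ^N be open, G a nonempty open bounded set with M = cl(G) ⊆ Ω, and let f : [0,T] × Ω → ℝ^N be continuous and locally Lipschitz continuous in the second variable. Suppose that ⟨f(t,u), ν⟩ ≤ 0 for all t ∈ [0,T], all u ∈ ∂M, and every Bony outer normal ν to M at u. Then M is positively invariant: for every τ ∈ (0,T] and every differentiable y : [0,τ] → Ω with y'(t) = f(t, y(t)) for all t ∈ [0,τ] and y(0) ∈ M, one has y(t) ∈ M for all t ∈ [0,τ]. -/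
open Set Metric
open scoped RealInnerProductSpace NNReal

/-!
If `u` is a point of `M` nearest to `x`, the ball with diameter from `x` to `u` touches `M` only at
`u`, so `(x - u) / 2` is a Bony outer normal. At time `t`, with `u` nearest to `y t`, the square of
the distance from `y` to `M` lies below `‖y · - u‖ ^ 2`, with equality at `t`, so its upper right
derivative is at most `2 ⟪f t (y t), y t - u⟫`. Subtracting the nonpositive term
`2 ⟪f t u, y t - u⟫`, the Lipschitz condition bounds this by `2 K` times the squared distance, and
Grönwall's inequality keeps the solution in `M`. The Lipschitz condition is only local, but it
applies for a short time after any visit of `y` to `p ∈ M`, as the nearest point satisfies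
`dist u p ≤ 2 * dist (y t) p`; since `M` is closed, these time steps exhaust the whole interval.
-/

open scoped Topology

/-- `ν` is a Bony outer normal to `M` at `u`, the notion of normal that makes sense for sets without
a smooth boundary. The point `u` is not assumed to lie on the boundary: see
`IsBonyNormal.mem_frontier`. -/
def IsBonyNormal {E : Type*} [SeminormedAddCommGroup E] (M : Set E) (u ν : E) : Prop :=
  ν ≠ 0 ∧ closedBall (u + ν) ‖ν‖ ∩ M = {u}

theorem IsBonyNormal.mem {E : Type*} [SeminormedAddCommGroup E] {M : Set E} {u ν : E}
    (h : IsBonyNormal M u ν) : u ∈ M :=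
  (h.2.symm.subset rfl).2

section NearestPoint

theorem dist_le_two_mul_dist_of_infDist_eq_dist {X : Type*} [PseudoMetricSpace X] {M : Set X}
    {x u p : X} (hxu : infDist x M = dist x u) (hp : p ∈ M) : dist u p ≤ 2 * dist x p := by
  have hxu_le : dist x u ≤ dist x p := hxu ▸ infDist_le_dist_of_mem hp
  linarith [dist_triangle_left u p x]

variable {E : Type*} [NormedAddCommGroup E] [NormedSpace ℝ E] {M : Set E} {x u ν : E}

theorem IsBonyNormal.mem_frontier (h : IsBonyNormal M u ν) : u ∈ frontier M := by
  have hball : ball (u + ν) ‖ν‖ ⊆ Mᶜ := by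
    intro z hz hzM
    obtain rfl : z = u := h.2.subset ⟨ball_subset_closedBall hz, hzM⟩
    simp at hz
  rw [frontier_eq_closure_inter_closure]
  refine ⟨subset_closure h.mem, closure_mono hball ?_⟩
  rw [closure_ball _ (norm_ne_zero_iff.2 h.1)]
  simp

theorem closedBall_midpoint_inter_eq_singleton [StrictConvexSpace ℝ E] (hu : u ∈ M)
    (hxu : infDist x M = dist x u) : closedBall (midpoint ℝ x u) (dist x u / 2) ∩ M = {u} := by
  have hmid : dist x (midpoint ℝ x u) = dist x u / 2 := by
    simp [dist_left_midpoint, div_eq_inv_mul]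
  refine Subset.antisymm (fun z ⟨hz, hzM⟩ => ?_) (singleton_subset_iff.2 ⟨?_, hu⟩)
  · have hle : dist x u ≤ dist x z := hxu ▸ infDist_le_dist_of_mem hzM
    have hz' : dist (midpoint ℝ x u) z ≤ dist x u / 2 := mem_closedBall'.1 hz
    have htri := dist_triangle x (midpoint ℝ x u) z
    have hzmid : midpoint ℝ x u = midpoint ℝ x z :=
      eq_midpoint_of_dist_eq_half (by linarith) (by linarith)
    simpa [midpoint_eq_midpoint_iff_vsub_eq_vsub, sub_eq_zero, eq_comm] using hzmid
  · simp [div_eq_inv_mul]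

theorem isBonyNormal_of_infDist_eq_dist [StrictConvexSpace ℝ E] (hu : u ∈ M) (hne : x ≠ u)
    (hxu : infDist x M = dist x u) : IsBonyNormal M u ((1 / 2 : ℝ) • (x - u)) := by
  have hcenter : u + (1 / 2 : ℝ) • (x - u) = midpoint ℝ x u := by
    rw [midpoint_eq_smul_add, invOf_eq_inv]
    module
  have hradius : ‖(1 / 2 : ℝ) • (x - u)‖ = dist x u / 2 := by
    simp [norm_smul, dist_eq_norm, div_eq_inv_mul]
  refine ⟨smul_ne_zero (by norm_num) (sub_ne_zero.2 hne), ?_⟩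
  rw [hcenter, hradius, closedBall_midpoint_inter_eq_singleton hu hxu]

end NearestPoint

section InnerProductSpace

variable {E : Type*} [NormedAddCommGroup E] [InnerProductSpace ℝ E] {M : Set E}

theorem inner_sub_nonpos_of_inner_isBonyNormal_nonpos {w x u : E} (hu : u ∈ M)
    (hxu : infDist x M = dist x u) (hw : ∀ ν, IsBonyNormal M u ν → ⟪w, ν⟫ ≤ 0) :
    ⟪w, x - u⟫ ≤ 0 := by
  rcases eq_or_ne x u with rfl | hne
  · simp
  · have hnormal := hw _ (isBonyNormal_of_infDist_eq_dist hu hne hxu)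
    rw [inner_smul_right] at hnormal
    linarith

/-- The one-sided Lipschitz condition with constant `K` for `g` on `s`, which controls the growth of
the squared distance between solutions of `ẏ = g(y)`. Since only an upper bound is imposed, `K` may
be negative. -/
def OneSidedLipschitzOn (K : ℝ) (g : E → E) (s : Set E) : Prop :=
  ∀ x ∈ s, ∀ z ∈ s, ⟪g x - g z, x - z⟫ ≤ K * ‖x - z‖ ^ 2

theorem OneSidedLipschitzOn.of_lipschitzOnWith {K : ℝ≥0} {g : E → E} {s : Set E}
    (hg : LipschitzOnWith K g s) : OneSidedLipschitzOn K g s := fun x hx z hz =>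
  calc ⟪g x - g z, x - z⟫ ≤ ‖g x - g z‖ * ‖x - z‖ := real_inner_le_norm _ _
    _ ≤ K * ‖x - z‖ * ‖x - z‖ := by gcongr; exact hg.norm_sub_le hx hz
    _ = K * ‖x - z‖ ^ 2 := by ring

theorem OneSidedLipschitzOn.inner_le_of_inner_isBonyNormal_nonpos {K : ℝ} {g : E → E} {s : Set E}
    {x u : E} (hg : OneSidedLipschitzOn K g s) (hx : x ∈ s) (hus : u ∈ s) (hu : u ∈ M)
    (hxu : infDist x M = dist x u) (hbony : ∀ ν, IsBonyNormal M u ν → ⟪g u, ν⟫ ≤ 0) :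
    ⟪g x, x - u⟫ ≤ K * ‖x - u‖ ^ 2 := by
  have hsplit : ⟪g x, x - u⟫ = ⟪g x - g u, x - u⟫ + ⟪g u, x - u⟫ := by
    rw [← inner_add_left, sub_add_cancel]
  linarith [hg x hx u hus, inner_sub_nonpos_of_inner_isBonyNormal_nonpos hu hxu hbony]

theorem eventually_slope_infDist_sq_lt {y : ℝ → E} {y' u : E} {t r : ℝ} (hu : u ∈ M)
    (htu : infDist (y t) M = dist (y t) u) (hy : HasDerivWithinAt y y' (Ioi t) t)
    (hr : 2 * ⟪y', y t - u⟫ < r) :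
    ∀ᶠ z in 𝓝[>] t, slope (fun s => infDist (y s) M ^ 2) t z < r := by
  rw [real_inner_comm] at hr
  have hslope := (hy.sub_const u).norm_sq.limsup_slope_le' self_notMem_Ioi hr
  filter_upwards [hslope, self_mem_nhdsWithin] with z hz (htz : t < z)
  have hle : infDist (y z) M ≤ ‖y z - u‖ := dist_eq_norm (y z) u ▸ infDist_le_dist_of_mem hu
  refine lt_of_le_of_lt ?_ hz
  simp only [slope_def_field, htu, dist_eq_norm]
  have := infDist_nonneg (x := y z) (s := M)
  have := sub_pos.2 htz
  gcongr

theorem mem_of_forall_exists_nearest_inner_le {y y' : ℝ → E} {a b K : ℝ} (hM : IsClosed M)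
    (hy : ContinuousOn y (Icc a b)) (hy' : ∀ t ∈ Ico a b, HasDerivWithinAt y (y' t) (Ioi t) t)
    (hya : y a ∈ M)
    (hnearest : ∀ t ∈ Ico a b, ∃ u ∈ M, infDist (y t) M = dist (y t) u ∧
      ⟪y' t, y t - u⟫ ≤ K * ‖y t - u‖ ^ 2) :
    ∀ t ∈ Icc a b, y t ∈ M := by
  intro t ht
  have hgronwall : infDist (y t) M ^ 2 ≤ gronwallBound 0 (2 * K) 0 (t - a) := by
    refine le_gronwallBound_of_liminf_deriv_right_le (f := fun s => infDist (y s) M ^ 2)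
      (f' := fun s => 2 * K * infDist (y s) M ^ 2)
      (((continuous_infDist_pt M).comp_continuousOn hy).pow 2) ?_ ?_ ?_ t ht
    · intro s hs r hr
      obtain ⟨u, hu, hsu, hinner⟩ := hnearest s hs
      rw [hsu, dist_eq_norm] at hr
      exact (eventually_slope_infDist_sq_lt hu hsu (hy' s hs) (by linarith)).frequently
    · simp [infDist_zero_of_mem hya]
    · simp
  rw [gronwallBound_ε0_δ0] at hgronwall
  exact (hM.mem_iff_infDist_zero ⟨_, hya⟩).2 ((sq_nonpos_iff _).1 hgronwall)

theorem eventually_mem_of_inner_isBonyNormal_nonpos [ProperSpace E] {Ω : Set E} (hM : IsClosed M)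
    (hMΩ : M ⊆ Ω) {f : ℝ → E → E} {y : ℝ → E} {s b ε K : ℝ} (hsb : s < b) (hε : 0 < ε)
    (hlip : ∀ t ∈ Ico s b, OneSidedLipschitzOn K (f t) (ball (y s) ε ∩ Ω))
    (hbony : ∀ t ∈ Ico s b, ∀ u ν, IsBonyNormal M u ν → ⟪f t u, ν⟫ ≤ 0)
    (hyΩ : ∀ t ∈ Icc s b, y t ∈ Ω) (hy : ContinuousOn y (Icc s b))
    (hy' : ∀ t ∈ Ico s b, HasDerivWithinAt y (f t (y t)) (Ioi t) t) (hys : y s ∈ M) :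
    ∀ᶠ t in 𝓝[>] s, y t ∈ M := by
  have hclose : ∀ᶠ t in 𝓝[≥] s, t ∈ Icc s b ∧ dist (y t) (y s) < ε / 2 := by
    rw [← nhdsWithin_Icc_eq_nhdsGE hsb]
    filter_upwards [self_mem_nhdsWithin,
      hy s (left_mem_Icc.2 hsb.le) (ball_mem_nhds (y s) (half_pos hε))] with t ht hyt
    exact ⟨ht, hyt⟩
  obtain ⟨c, hsc, hc⟩ := mem_nhdsGE_iff_exists_Icc_subset.1 hclose
  have hIco : Ico s c ⊆ Ico s b := Ico_subset_Ico_right (hc (right_mem_Icc.2 hsc.le)).1.2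
  have hmem : ∀ t ∈ Icc s c, y t ∈ M := by
    refine mem_of_forall_exists_nearest_inner_le (y' := fun t => f t (y t)) (K := K) hM
      (hy.mono fun t ht => (hc ht).1) (fun t ht => hy' t (hIco ht)) hys fun t ht => ?_
    obtain ⟨htb, hdist⟩ := hc (Ico_subset_Icc_self ht)
    obtain ⟨u, hu, htu⟩ := hM.exists_infDist_eq_dist ⟨_, hys⟩ (y t)
    have hyt : y t ∈ ball (y s) ε ∩ Ω := ⟨mem_ball.2 (by linarith), hyΩ t htb⟩
    have hu_ball : u ∈ ball (y s) ε ∩ Ω :=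
      ⟨mem_ball.2 (by linarith [dist_le_two_mul_dist_of_infDist_eq_dist htu hys]), hMΩ hu⟩
    exact ⟨u, hu, htu, (hlip t (hIco ht)).inner_le_of_inner_isBonyNormal_nonpos hyt hu_ball hu
      htu (hbony t (hIco ht) u)⟩
  filter_upwards [Icc_mem_nhdsGT hsc] using hmem

theorem bony_positive_invariance_general [ProperSpace E] {Ω : Set E} (hM : IsClosed M)
    (hMΩ : M ⊆ Ω) {f : ℝ → E → E} {a b : ℝ}
    (hlip : ∀ x₀ ∈ M, ∃ ε > 0, ∃ K : ℝ, ∀ t ∈ Ico a b,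
      OneSidedLipschitzOn K (f t) (ball x₀ ε ∩ Ω))
    (hbony : ∀ t ∈ Ico a b, ∀ u ν, IsBonyNormal M u ν → ⟪f t u, ν⟫ ≤ 0)
    {y : ℝ → E} (hyΩ : ∀ t ∈ Icc a b, y t ∈ Ω) (hy : IsIntegralCurveOn y f (Icc a b))
    (hya : y a ∈ M) : ∀ t ∈ Icc a b, y t ∈ M := by
  have hclosed : IsClosed (y ⁻¹' M ∩ Icc a b) :=
    inter_comm _ _ ▸ hy.continuousOn.preimage_isClosed_of_isClosed isClosed_Icc hM
  refine hclosed.Icc_subset_of_forall_mem_nhdsWithin hya fun s ⟨hsM, hs⟩ => ?_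
  obtain ⟨ε, hε, K, hK⟩ := hlip (y s) hsM
  have hIco : Ico s b ⊆ Ico a b := Ico_subset_Ico_left hs.1
  have hIcc : Icc s b ⊆ Icc a b := Icc_subset_Icc_left hs.1
  have hderiv : ∀ t ∈ Ico s b, HasDerivWithinAt y (f t (y t)) (Ioi t) t := fun t ht =>
    (hy t (hIcc (Ico_subset_Icc_self ht))).mono_of_mem_nhdsWithin
      (Icc_mem_nhdsGT_of_mem (hIco ht))
  exact eventually_mem_of_inner_isBonyNormal_nonpos hM hMΩ hs.2 hε (fun t ht => hK t (hIco ht))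
    (fun t ht => hbony t (hIco ht)) (fun t ht => hyΩ t (hIcc ht)) (hy.continuousOn.mono hIcc)
    hderiv hsM

end InnerProductSpace

/-- Bony. Let `M = cl G ⊆ Ω` with `G` nonempty open bounded, and let
`f` be continuous and locally Lipschitz in the second variable. If `⟪f(t,u), ν⟫ ≤ 0`
for every Bony outer normal `ν` to `M` at every `u ∈ ∂M`, then `M` is positively
invariant for `ẏ = f(t,y)`. -/
theorem bony_positive_invariance
    {N : ℕ} {T : ℝ} (hT : 0 < T)
    (Ω : Set (EuclideanSpace ℝ (Fin N))) (hΩ : IsOpen Ω)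
    (G : Set (EuclideanSpace ℝ (Fin N)))
    (hne : G.Nonempty) (hG : IsOpen G) (hGb : Bornology.IsBounded G)
    (hMΩ : closure G ⊆ Ω)
    (f : ℝ → EuclideanSpace ℝ (Fin N) → EuclideanSpace ℝ (Fin N))
    (hf : ContinuousOn (fun p : ℝ × EuclideanSpace ℝ (Fin N) => f p.1 p.2)
      (Icc (0 : ℝ) T ×ˢ Ω))
    (hlip : ∀ x₀ ∈ Ω, ∃ ε > (0 : ℝ), ∃ K : ℝ≥0, ∀ t ∈ Icc (0 : ℝ) T,
      LipschitzOnWith K (f t) (ball x₀ ε ∩ Ω))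
    (hbony : ∀ t ∈ Icc (0 : ℝ) T, ∀ u ∈ frontier (closure G),
      ∀ ν : EuclideanSpace ℝ (Fin N), ν ≠ 0 →
        closedBall (u + ν) ‖ν‖ ∩ closure G = {u} → ⟪f t u, ν⟫ ≤ 0) :
    ∀ τ ∈ Ioc (0 : ℝ) T, ∀ y : ℝ → EuclideanSpace ℝ (Fin N),
      (∀ t ∈ Icc (0 : ℝ) τ, y t ∈ Ω) →
      (∀ t ∈ Icc (0 : ℝ) τ, HasDerivWithinAt y (f t (y t)) (Icc (0 : ℝ) τ) t) →
      y 0 ∈ closure G → ∀ t ∈ Icc (0 : ℝ) τ, y t ∈ closure G := by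
  intro τ hτ y hyΩ hy hy0
  have hIco : Ico 0 τ ⊆ Icc 0 T := Ico_subset_Icc_self.trans (Icc_subset_Icc_right hτ.2)
  refine bony_positive_invariance_general isClosed_closure hMΩ (fun x₀ hx₀ => ?_)
    (fun t ht u ν hν => hbony t (hIco ht) u hν.mem_frontier ν hν.1 hν.2) hyΩ hy hy0
  obtain ⟨ε, hε, K, hK⟩ := hlip x₀ (hMΩ hx₀)
  exact ⟨ε, hε, K, fun t ht => .of_lipschitzOnWith (hK t (hIco ht))⟩
end
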